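/- Let μ be a Borel probability measure on [0,1)^d assigning zero mass to the boundary of every dyadic cube, let ℓ ∈ ℕ and ρ ∈ (0,1], and suppose μ is dyadic mean (ℓ,ρ)-porous. Then the upper packing dimension of μ satisfies udim_P(μ) ≤ d − 2^{−ℓd}·ρ/ℓ. -/

import Mathlib

open MeasureTheory Filter Metric Set
open scoped Classical

/-- The half-open dyadic cell of level `n` with index `j`, i.e. `∏ᵢ [jᵢ/2ⁿ, (jᵢ+1)/2ⁿ)`. -/
def dyadicCell (d n : ℕ) (j : Fin d → ℤ) : Set (EuclideanSpace ℝ (Fin d)) :=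
  {y | ∀ i, (j i : ℝ) / 2 ^ n ≤ y i ∧ y i < ((j i : ℝ) + 1) / 2 ^ n}

/-- The index of the level-`n` dyadic cube containing `x`. -/
noncomputable def dyadicIdx (d n : ℕ) (x : EuclideanSpace ℝ (Fin d)) : Fin d → ℤ :=
  fun i => ⌊(2 : ℝ) ^ n * x i⌋

/-- `Q_n(x)`: the (unique) half-open dyadic cube of level `n` containing `x`. -/
noncomputable def Qcube (d n : ℕ) (x : EuclideanSpace ℝ (Fin d)) :
    Set (EuclideanSpace ℝ (Fin d)) :=
  dyadicCell d n (dyadicIdx d n x)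

/-- `Q` is a dyadic cube (of some level) inside the unit cube `[0,1)^d`. -/
def IsDyadicCube (d : ℕ) (Q : Set (EuclideanSpace ℝ (Fin d))) : Prop :=
  ∃ (n : ℕ) (j : Fin d → ℤ), (∀ i, 0 ≤ j i ∧ j i < 2 ^ n) ∧ Q = dyadicCell d n j

/-- The half-open unit cube `[0,1)^d`. -/
def unitCube (d : ℕ) : Set (EuclideanSpace ℝ (Fin d)) := dyadicCell d 0 0

/-- `por₂(μ,x,n,ε)`: the least `ℓ'` such that some dyadic subcube `R` of `Q_n(x)` of
relative level `ℓ'` satisfies `μ(R) ≤ ε·μ(Q_n(x))`. -/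
noncomputable def por2 (d : ℕ) (μ : Measure (EuclideanSpace ℝ (Fin d)))
    (x : EuclideanSpace ℝ (Fin d)) (n : ℕ) (ε : ℝ) : ℕ :=
  sInf {ℓ' : ℕ | ∃ k : Fin d → Fin (2 ^ ℓ'),
    μ (dyadicCell d (n + ℓ') (fun i => 2 ^ ℓ' * dyadicIdx d n x i + ((k i : ℕ) : ℤ))) ≤
      ENNReal.ofReal ε * μ (Qcube d n x)}

/-- `μ` is dyadic mean `(ℓ,ρ)`-porous: for every `ε > 0`, at `μ`-a.e. point the lower
asymptotic proportion of scales `i` with `por₂(μ,x,i,ε) ≤ ℓ` is at least `ρ`. -/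
def IsDyadicMeanPorous (d : ℕ) (μ : Measure (EuclideanSpace ℝ (Fin d)))
    (ℓ : ℕ) (ρ : ℝ) : Prop :=
  ∀ ε : ℝ, 0 < ε → ∀ᵐ x ∂μ,
    ρ ≤ Filter.liminf (fun n : ℕ =>
      (((Finset.range n).filter fun i => por2 d μ x i ε ≤ ℓ).card : ℝ) / n) atTop

/-- The upper local dimension of a measure at a point. -/
noncomputable def upperLocalDim {X : Type*} [MetricSpace X] [MeasurableSpace X]
    (μ : Measure X) (x : X) : EReal :=
  Filter.limsup (fun r : ℝ =>
    ((Real.log (μ (Metric.ball x r)).toReal / Real.log r : ℝ) : EReal))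
    (nhdsWithin 0 (Set.Ioi 0))

/-- The upper packing dimension of a measure: the `μ`-essential supremum of the upper
local dimensions. -/
noncomputable def upperPackingDim {X : Type*} [MetricSpace X] [MeasurableSpace X]
    (μ : Measure X) : EReal :=
  essSup (upperLocalDim μ) μ

/-!
By Cauchy–Schwarz, the square roots of the masses of the `2^{ℓd}` subcells of relative level `ℓ` of
a cell `Q` add up to at most `2^{ℓd/2} √μ(Q)`. If one of the subcells carries at most an
`ε`-fraction of the mass, with `ε` small in terms of `ℓd`, the exponent `ℓd` improves to
`ℓd - 2^{-ℓd}`. Hence `μ(Q_{n+ℓm}(x))^{-1/2}`, divided by these factors along the levels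
`n, n + ℓ, …, n + ℓ(m-1)`, is a nonnegative supermartingale in `m`, and by Markov's inequality and
Borel–Cantelli it is almost surely eventually smaller than `(m + 1)²`. This bounds `μ(Q_N(x))` from
below. Averaging the bounds over the starting levels `0 ≤ n < ℓ` counts every level once, so the
porous scales save `2^{-ℓd} ρ / ℓ` in the exponent.
-/

section RealAnalysis

lemma sum_sqrt_le_sqrt_card_mul_sqrt_sum {ι : Type*} (s : Finset ι) {q : ι → ℝ}
    (hq : ∀ i, 0 ≤ q i) : ∑ i ∈ s, √(q i) ≤ √s.card * √(∑ i ∈ s, q i) := by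
  simpa using Real.sum_sqrt_mul_sqrt_le s (f := fun _ => 1) (fun _ => zero_le_one) hq

lemma sum_sqrt_le_of_exists_le_mul {ι : Type*} {s : Finset ι} {q : ι → ℝ} {p ε : ℝ}
    (hq : ∀ i, 0 ≤ q i) (hε : 0 ≤ ε) (hsum : ∑ i ∈ s, q i = p) (hsmall : ∃ k ∈ s, q k ≤ ε * p) :
    ∑ i ∈ s, √(q i) ≤ (√((s.card : ℝ) - 1) + √ε) * √p := by
  obtain ⟨k, hk, hqk⟩ := hsmall
  have hrest : ∑ i ∈ s.erase k, q i ≤ p := by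
    rw [← hsum]
    exact Finset.sum_le_sum_of_subset_of_nonneg (Finset.erase_subset _ _) fun i _ _ => hq i
  calc ∑ i ∈ s, √(q i)
      = √(q k) + ∑ i ∈ s.erase k, √(q i) := (Finset.add_sum_erase _ _ hk).symm
    _ ≤ √(ε * p) + √(s.erase k).card * √(∑ i ∈ s.erase k, q i) := by
        gcongr
        exact sum_sqrt_le_sqrt_card_mul_sqrt_sum _ hq
    _ ≤ √(ε * p) + √(s.erase k).card * √p := by gcongr
    _ = (√((s.card : ℝ) - 1) + √ε) * √p := by
        rw [Real.sqrt_mul hε, Finset.cast_card_erase_of_mem hk]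
        ring

/-- `ε` is so small that discarding an `ε`-fraction of the mass from one of `N` subcells improves
the Cauchy–Schwarz factor `√N` of a sum of square roots at least to `√(N · 2^{-1/N})`. -/
def IsSparsityThreshold (N ε : ℝ) : Prop :=
  0 < ε ∧ √(N - 1) + √ε ≤ √(N * 2 ^ (-N⁻¹))

lemma sub_one_lt_mul_two_rpow_neg_inv {N : ℝ} (hN : 0 < N) : N - 1 < N * 2 ^ (-N⁻¹) := by
  have hexp : 1 - Real.log 2 / N ≤ (2 : ℝ) ^ (-N⁻¹) := by
    rw [Real.rpow_def_of_pos two_pos]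
    refine le_of_eq_of_le ?_ (Real.add_one_le_exp _)
    ring
  calc N - 1 < N - Real.log 2 := by linarith [Real.log_two_lt_d9]
    _ = N * (1 - Real.log 2 / N) := by field_simp
    _ ≤ N * 2 ^ (-N⁻¹) := by gcongr

lemma exists_isSparsityThreshold {N : ℝ} (hN : 1 ≤ N) : ∃ ε, IsSparsityThreshold N ε := by
  have hlt : √(N - 1) < √(N * 2 ^ (-N⁻¹)) :=
    Real.sqrt_lt_sqrt (by linarith) (sub_one_lt_mul_two_rpow_neg_inv (by linarith))
  have hpos := sub_pos.2 hlt
  refine ⟨(√(N * 2 ^ (-N⁻¹)) - √(N - 1)) ^ 2, by positivity, ?_⟩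
  rw [Real.sqrt_sq hpos.le]
  linarith

lemma sum_range_sum_range_add_mul {M : Type*} [AddCommMonoid M] (ℓ m : ℕ) (f : ℕ → M) :
    ∑ a ∈ Finset.range ℓ, ∑ i ∈ Finset.range m, f (a + ℓ * i) =
      ∑ t ∈ Finset.range (ℓ * m), f t := by
  induction m with
  | zero => simp
  | succ m ih =>
    rw [mul_add_one, Finset.sum_range_add]
    simp only [Finset.sum_range_succ, Finset.sum_add_distrib, ih, add_comm]

lemma eventually_sub_mul_lt_of_le_liminf {α : Type*} {F : Filter α} {u v : α → ℝ}
    {a c ρ B : ℝ} (hu : Tendsto u F (nhds a)) (hv : F.IsBoundedUnder (· ≥ ·) v) (hc : 0 < c)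
    (hρ : ρ ≤ liminf v F) (hB : a - c * ρ < B) : ∀ᶠ t in F, u t - c * v t < B := by
  obtain ⟨b, hab, hbB⟩ := exists_between (sub_lt_iff_lt_add.1 hB)
  have hlt : (b - B) / c < liminf v F := by
    refine lt_of_lt_of_le ?_ hρ
    rw [div_lt_iff₀ hc]
    linarith
  filter_upwards [hu.eventually_lt_const hab, eventually_lt_of_lt_liminf hlt hv] with t htu htv
  rw [div_lt_iff₀ hc] at htv
  linarith

lemma tendsto_logb_add_linear_div (a b c : ℝ) :
    Tendsto (fun n : ℕ => (a * Real.logb 2 (n + 2) + (n + c) * b) / n) atTop (nhds b) := by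
  have hlog : (fun t : ℝ => Real.logb 2 (t + 2)) =o[atTop] fun t => t := by
    refine (Real.isLittleO_logb_id_atTop.comp_tendsto
      (tendsto_atTop_add_const_right _ 2 tendsto_id)).trans_isBigO ?_
    exact (Asymptotics.isBigO_refl _ _).add (Asymptotics.isLittleO_const_id_atTop 2).isBigO
  have herror : Tendsto (fun t : ℝ => (a * Real.logb 2 (t + 2) + c * b) / t) atTop (nhds 0) :=
    ((hlog.const_mul_left a).add (Asymptotics.isLittleO_const_id_atTop _)).tendsto_div_nhds_zero
  have hlim := (herror.comp tendsto_natCast_atTop_atTop).add_const b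
  rw [zero_add] at hlim
  refine hlim.congr' ?_
  filter_upwards [eventually_ne_atTop 0] with n hn
  simp only [Function.comp_apply]
  field_simp
  ring

end RealAnalysis

section MeasureSpace

variable {X : Type*} [MeasurableSpace X]

lemma ae_measure_preimage_singleton_ne_zero {ι : Type*} [Countable ι] [MeasurableSpace ι]
    [MeasurableSingletonClass ι] {f : X → ι} (hf : Measurable f) (μ : Measure X) :
    ∀ᵐ x ∂μ, μ (f ⁻¹' {f x}) ≠ 0 := by
  refine ae_of_ae_map (p := fun i => μ (f ⁻¹' {i}) ≠ 0) hf.aemeasurable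
    (ae_iff_of_countable.2 fun i hi => ?_)
  rwa [Measure.map_apply hf (measurableSet_singleton i)] at hi

lemma ae_eventually_lt_sq_of_lintegral_le {μ : Measure X} {f : ℕ → X → ENNReal}
    (hf : ∀ m, AEMeasurable (f m) μ) {C : ENNReal} (hC : C ≠ ⊤) (hle : ∀ m, ∫⁻ x, f m x ∂μ ≤ C) :
    ∀ᵐ x ∂μ, ∀ᶠ m : ℕ in atTop, f m x < ENNReal.ofReal (((m : ℝ) + 1) ^ 2) := by
  have hmarkov (m : ℕ) : μ {x | ENNReal.ofReal (((m : ℝ) + 1) ^ 2) ≤ f m x} ≤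
      C * ENNReal.ofReal (1 / ((m + 1 : ℕ) : ℝ) ^ 2) := by
    have hpos : (0 : ℝ) < ((m : ℝ) + 1) ^ 2 := by positivity
    refine (meas_ge_le_lintegral_div (hf m) (ENNReal.ofReal_pos.2 hpos).ne'
      ENNReal.ofReal_ne_top).trans ?_
    rw [div_eq_mul_inv, ← ENNReal.ofReal_inv_of_pos hpos, one_div, Nat.cast_add_one]
    gcongr
    exact hle m
  have hsummable : Summable fun m : ℕ => 1 / ((m + 1 : ℕ) : ℝ) ^ 2 :=
    (summable_nat_add_iff 1).2 (Real.summable_one_div_nat_pow.2 one_lt_two)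
  have hfinite : ∑' m : ℕ, μ {x | ENNReal.ofReal (((m : ℝ) + 1) ^ 2) ≤ f m x} ≠ ⊤ := by
    refine ne_top_of_le_ne_top ?_ (ENNReal.tsum_le_tsum hmarkov)
    rw [ENNReal.tsum_mul_left]
    exact ENNReal.mul_ne_top hC hsummable.tsum_ofReal_ne_top
  filter_upwards [ae_eventually_notMem hfinite] with x hx
  filter_upwards [hx] with m hm using not_le.1 hm

end MeasureSpace

section LocalDimension

variable {X : Type*} [MetricSpace X] [MeasurableSpace X] {μ : Measure X} [IsLocallyFiniteMeasure μ]

lemma eventually_measure_ball_lt_top (x : X) :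
    ∀ᶠ r in nhdsWithin (0 : ℝ) (Ioi 0), μ (ball x r) < ⊤ := by
  have hclosed : ∀ᶠ r in nhds (0 : ℝ), μ (closedBall x r) < ⊤ :=
    (tendsto_closedBall_smallSets x).eventually (μ.finiteAt_nhds x).eventually
  filter_upwards [nhdsWithin_le_nhds hclosed] with r hr
  exact (measure_mono ball_subset_closedBall).trans_lt hr

/-- The dyadic exponent for which `C / 2 ^ n` is comparable to, and at most, the radius `r`. -/
noncomputable def dyadicScale (C r : ℝ) : ℕ := ⌈Real.logb 2 (C / r)⌉₊

lemma tendsto_neg_logb_nhdsGT_zero :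
    Tendsto (fun r => -Real.logb 2 r) (nhdsWithin 0 (Ioi 0)) atTop :=
  tendsto_neg_atBot_atTop.comp (Real.tendsto_logb_nhdsGT_zero one_lt_two)

lemma div_two_pow_dyadicScale_le {C r : ℝ} (hC : 0 < C) (hr : 0 < r) :
    C / 2 ^ dyadicScale C r ≤ r := by
  have hscale : C / r ≤ 2 ^ dyadicScale C r := by
    rw [← Real.rpow_natCast, ← Real.logb_le_iff_le_rpow one_lt_two (by positivity)]
    exact Nat.le_ceil _
  rwa [div_le_comm₀ (by positivity) hr]

lemma tendsto_logb_div_nhdsGT_zero {C : ℝ} (hC : 0 < C) :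
    Tendsto (fun r => Real.logb 2 (C / r)) (nhdsWithin 0 (Ioi 0)) atTop :=
  (Real.tendsto_logb_atTop one_lt_two).comp (tendsto_inv_nhdsGT_zero.const_mul_atTop hC)

lemma tendsto_dyadicScale {C : ℝ} (hC : 0 < C) :
    Tendsto (dyadicScale C) (nhdsWithin 0 (Ioi 0)) atTop :=
  tendsto_nat_ceil_atTop.comp (tendsto_logb_div_nhdsGT_zero hC)

lemma tendsto_dyadicScale_div_neg_logb {C : ℝ} (hC : 0 < C) :
    Tendsto (fun r => (dyadicScale C r : ℝ) / -Real.logb 2 r) (nhdsWithin 0 (Ioi 0)) (nhds 1) := by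
  have hlog := tendsto_logb_div_nhdsGT_zero hC
  have hquot : Tendsto (fun r => Real.logb 2 (C / r) / -Real.logb 2 r)
      (nhdsWithin 0 (Ioi 0)) (nhds 1) := by
    have hlim := (tendsto_neg_logb_nhdsGT_zero.const_div_atTop (Real.logb 2 C)).add_const 1
    rw [zero_add] at hlim
    refine hlim.congr' ?_
    filter_upwards [self_mem_nhdsWithin, tendsto_neg_logb_nhdsGT_zero.eventually_gt_atTop 0]
      with r hr hpos
    rw [Real.logb_div hC.ne' (ne_of_gt hr), sub_eq_add_neg, add_div, div_self hpos.ne']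
  have hprod := (tendsto_nat_ceil_div_atTop.comp hlog).mul hquot
  rw [one_mul] at hprod
  refine hprod.congr' ?_
  filter_upwards [hlog.eventually_gt_atTop 0] with r hr
  exact div_mul_div_cancel₀ hr.ne'

lemma upperLocalDim_le_of_eventually_two_rpow_le {x : X} {B C : ℝ} (hC : 0 < C)
    (h : ∀ᶠ n : ℕ in atTop, (2 : ℝ) ^ (-(B * n)) ≤ μ.real (ball x (C / 2 ^ n))) :
    upperLocalDim μ x ≤ B := by
  have hlim : Tendsto (fun r => ((B * (dyadicScale C r / -Real.logb 2 r) : ℝ) : EReal))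
      (nhdsWithin 0 (Ioi 0)) (nhds B) := by
    rw [EReal.tendsto_coe]
    simpa using (tendsto_dyadicScale_div_neg_logb hC).const_mul B
  refine (limsup_le_limsup ?_).trans_eq hlim.limsup_eq
  filter_upwards [(tendsto_dyadicScale hC).eventually h, eventually_measure_ball_lt_top (μ := μ) x,
    tendsto_neg_logb_nhdsGT_zero.eventually_gt_atTop 0, self_mem_nhdsWithin]
    with r hscale hfin hlog hr
  have hball : (2 : ℝ) ^ (-(B * dyadicScale C r)) ≤ μ.real (ball x r) :=
    hscale.trans (measureReal_mono (ball_subset_ball (div_two_pow_dyadicScale_le hC hr)) hfin.ne)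
  have hlogball : -(B * dyadicScale C r) ≤ Real.logb 2 (μ.real (ball x r)) :=
    (Real.le_logb_iff_rpow_le one_lt_two ((Real.rpow_pos_of_pos two_pos _).trans_le hball)).2 hball
  rw [EReal.coe_le_coe_iff, ← measureReal_def]
  calc Real.log (μ.real (ball x r)) / Real.log r
      = -Real.logb 2 (μ.real (ball x r)) / -Real.logb 2 r := by
        rw [neg_div_neg_eq, Real.logb, Real.logb,
          div_div_div_cancel_right₀ (Real.log_pos one_lt_two).ne']
    _ ≤ B * dyadicScale C r / -Real.logb 2 r := by
        gcongr
        exact neg_le.1 hlogball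
    _ = B * (dyadicScale C r / -Real.logb 2 r) := mul_div_assoc ..

end LocalDimension

section DyadicCells

variable {d : ℕ}

/-- The level-`(n + e)` index of the subcell with relative position `k` in the level-`n` cell
with index `j`, written exactly as in `por2`. -/
def dyadicSubIdx (e : ℕ) (j : Fin d → ℤ) (k : Fin d → Fin (2 ^ e)) : Fin d → ℤ :=
  fun i => 2 ^ e * j i + ((k i : ℕ) : ℤ)

lemma dyadicSubIdx_injective (e : ℕ) (j : Fin d → ℤ) : Function.Injective (dyadicSubIdx e j) := by
  intro k k' h
  ext i
  simpa [dyadicSubIdx] using congrFun h i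

lemma dyadicSubIdx_ediv (e : ℕ) (j : Fin d → ℤ) (k : Fin d → Fin (2 ^ e)) (i : Fin d) :
    dyadicSubIdx e j k i / 2 ^ e = j i := by
  have hk : ((k i : ℕ) : ℤ) < 2 ^ e := mod_cast (k i).2
  rw [dyadicSubIdx, Int.mul_add_ediv_left _ _ (by positivity),
    Int.ediv_eq_zero_of_lt (by positivity) hk, add_zero]

lemma exists_dyadicSubIdx_eq_iff {e : ℕ} {j j' : Fin d → ℤ} :
    (∃ k, dyadicSubIdx e j k = j') ↔ ∀ i, j' i / 2 ^ e = j i := by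
  constructor
  · rintro ⟨k, rfl⟩
    exact dyadicSubIdx_ediv e j k
  · intro h
    have hpos : (0 : ℤ) < 2 ^ e := by positivity
    have hcast (i : Fin d) : ((j' i % 2 ^ e).toNat : ℤ) = j' i % 2 ^ e :=
      Int.toNat_of_nonneg (Int.emod_nonneg _ hpos.ne')
    refine ⟨fun i => ⟨(j' i % 2 ^ e).toNat, ?_⟩, ?_⟩
    · zify
      rw [hcast]
      exact Int.emod_lt_of_pos _ hpos
    · funext i
      rw [dyadicSubIdx, hcast, ← h i, Int.mul_ediv_add_emod]

lemma dyadicIdx_add_ediv (n e : ℕ) (x : EuclideanSpace ℝ (Fin d)) (i : Fin d) :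
    dyadicIdx d (n + e) x i / 2 ^ e = dyadicIdx d n x i := by
  have hscale : (2 : ℝ) ^ n * x i = 2 ^ (n + e) * x i / ((2 ^ e : ℕ) : ℝ) := by
    push_cast
    field_simp
    ring
  rw [dyadicIdx, dyadicIdx, hscale, Int.floor_div_natCast, Nat.cast_pow, Nat.cast_ofNat]

lemma mem_dyadicCell_iff {n : ℕ} {j : Fin d → ℤ} {y : EuclideanSpace ℝ (Fin d)} :
    y ∈ dyadicCell d n j ↔ dyadicIdx d n y = j := by
  have hpos : (0 : ℝ) < 2 ^ n := by positivity
  simp only [dyadicCell, dyadicIdx, Set.mem_ofPred_eq, funext_iff]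
  refine forall_congr' fun i => ?_
  rw [Int.floor_eq_iff, div_le_iff₀ hpos, lt_div_iff₀ hpos, mul_comm (y i)]

lemma mem_Qcube_self (n : ℕ) (x : EuclideanSpace ℝ (Fin d)) : x ∈ Qcube d n x :=
  mem_dyadicCell_iff.2 rfl

lemma dyadicCell_eq_preimage (n : ℕ) (j : Fin d → ℤ) :
    dyadicCell d n j = dyadicIdx d n ⁻¹' {j} := by
  ext y
  exact mem_dyadicCell_iff

lemma measurable_dyadicIdx (n : ℕ) : Measurable (dyadicIdx d n) := by
  refine measurable_pi_iff.2 fun i => Int.measurable_floor.comp ?_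
  fun_prop

lemma measurableSet_dyadicCell (n : ℕ) (j : Fin d → ℤ) : MeasurableSet (dyadicCell d n j) := by
  rw [dyadicCell_eq_preimage]
  exact measurable_dyadicIdx n (measurableSet_singleton j)

lemma dyadicCell_eq_iUnion (n e : ℕ) (j : Fin d → ℤ) :
    dyadicCell d n j = ⋃ k, dyadicCell d (n + e) (dyadicSubIdx e j k) := by
  ext y
  simp only [mem_iUnion, mem_dyadicCell_iff, eq_comm (a := dyadicIdx d (n + e) y),
    exists_dyadicSubIdx_eq_iff, dyadicIdx_add_ediv]
  exact funext_iff

lemma pairwise_disjoint_dyadicSubcell (n e : ℕ) (j : Fin d → ℤ) :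
    Pairwise (Function.onFun Disjoint fun k => dyadicCell d (n + e) (dyadicSubIdx e j k)) := by
  intro k k' hne
  refine Set.disjoint_left.2 fun y hk hk' => hne (dyadicSubIdx_injective e j ?_)
  exact (mem_dyadicCell_iff.1 hk).symm.trans (mem_dyadicCell_iff.1 hk')

lemma Qcube_anti (x : EuclideanSpace ℝ (Fin d)) : Antitone fun n => Qcube d n x := by
  intro n m hnm y hy
  obtain ⟨e, rfl⟩ := Nat.exists_eq_add_of_le hnm
  refine mem_dyadicCell_iff.2 (funext fun i => ?_)
  rw [← dyadicIdx_add_ediv n e y, mem_dyadicCell_iff.1 hy, dyadicIdx_add_ediv]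

lemma dist_le_of_mem_dyadicCell {n : ℕ} {j : Fin d → ℤ} {x y : EuclideanSpace ℝ (Fin d)}
    (hx : x ∈ dyadicCell d n j) (hy : y ∈ dyadicCell d n j) : dist x y ≤ √d / 2 ^ n := by
  have hcoord (i : Fin d) : dist (x i) (y i) ≤ 1 / 2 ^ n := by
    have hxi := hx i
    have hyi := hy i
    rw [add_div] at hxi hyi
    rw [Real.dist_eq, abs_le]
    constructor <;> linarith
  calc dist x y = √(∑ i, dist (x i) (y i) ^ 2) := EuclideanSpace.dist_eq x y
    _ ≤ √(∑ _i : Fin d, (1 / 2 ^ n) ^ 2) := by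
        gcongr with i
        exact hcoord i
    _ = √d / 2 ^ n := by
        rw [Finset.sum_const, Finset.card_univ, Fintype.card_fin, nsmul_eq_mul,
          Real.sqrt_mul (Nat.cast_nonneg d), Real.sqrt_sq (by positivity), mul_one_div]

lemma Qcube_subset_ball (n : ℕ) (x : EuclideanSpace ℝ (Fin d)) :
    Qcube d n x ⊆ ball x ((√d + 1) / 2 ^ n) := by
  intro y hy
  calc dist y x ≤ √d / 2 ^ n := dist_le_of_mem_dyadicCell hy (mem_Qcube_self n x)
    _ < (√d + 1) / 2 ^ n := by
      gcongr
      exact lt_add_one _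

lemma isBounded_dyadicCell (n : ℕ) (j : Fin d → ℤ) : Bornology.IsBounded (dyadicCell d n j) :=
  isBounded_iff.2 ⟨_, fun _ hx _ hy => dist_le_of_mem_dyadicCell hx hy⟩

end DyadicCells

section SparseSubcells

variable {d : ℕ}

/-- Some subcell of relative level `e` of the level-`n` cell with index `j` carries at most an
`ε`-fraction of the mass of that cell. -/
def HasSparseSubcell (μ : Measure (EuclideanSpace ℝ (Fin d))) (e : ℕ) (ε : ℝ) (n : ℕ)
    (j : Fin d → ℤ) : Prop :=
  ∃ k : Fin d → Fin (2 ^ e), μ (dyadicCell d (n + e) (dyadicSubIdx e j k)) ≤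
    ENNReal.ofReal ε * μ (dyadicCell d n j)

lemma por2_eq_sInf_hasSparseSubcell (μ : Measure (EuclideanSpace ℝ (Fin d)))
    (x : EuclideanSpace ℝ (Fin d)) (n : ℕ) (ε : ℝ) :
    por2 d μ x n ε = sInf {e | HasSparseSubcell μ e ε n (dyadicIdx d n x)} := rfl

lemma card_dyadicSubIdx (d e : ℕ) : Fintype.card (Fin d → Fin (2 ^ e)) = 2 ^ (e * d) := by
  simp [pow_mul]

lemma sum_measure_dyadicSubcell (μ : Measure (EuclideanSpace ℝ (Fin d))) (n e : ℕ)
    (j : Fin d → ℤ) :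
    ∑ k, μ (dyadicCell d (n + e) (dyadicSubIdx e j k)) = μ (dyadicCell d n j) := by
  rw [dyadicCell_eq_iUnion n e j, measure_iUnion (pairwise_disjoint_dyadicSubcell n e j)
    (fun _ => measurableSet_dyadicCell _ _), tsum_fintype]

lemma exists_measure_dyadicSubcell_le (μ : Measure (EuclideanSpace ℝ (Fin d))) (n e : ℕ)
    (j : Fin d → ℤ) :
    ∃ k, μ (dyadicCell d (n + e) (dyadicSubIdx e j k)) ≤
      (2 ^ (e * d))⁻¹ * μ (dyadicCell d n j) := by
  obtain ⟨k, -, hk⟩ := ENNReal.exists_le_of_sum_le Finset.univ_nonempty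
    (f := fun k => μ (dyadicCell d (n + e) (dyadicSubIdx e j k)))
    (g := fun _ => (2 ^ (e * d))⁻¹ * μ (dyadicCell d n j)) (by
      rw [sum_measure_dyadicSubcell, Finset.sum_const, Finset.card_univ, card_dyadicSubIdx,
        nsmul_eq_mul, ← mul_assoc, Nat.cast_pow, Nat.cast_ofNat,
        ENNReal.mul_inv_cancel (by positivity) (by finiteness), one_mul])
  exact ⟨k, hk⟩

lemma exists_hasSparseSubcell (hd : 0 < d) (μ : Measure (EuclideanSpace ℝ (Fin d))) {ε : ℝ}
    (hε : 0 < ε) (n : ℕ) (j : Fin d → ℤ) : ∃ e, HasSparseSubcell μ e ε n j := by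
  obtain ⟨e, he⟩ := ENNReal.exists_inv_two_pow_lt (ENNReal.ofReal_pos.2 hε).ne'
  obtain ⟨k, hk⟩ := exists_measure_dyadicSubcell_le μ n e j
  refine ⟨e, k, hk.trans ?_⟩
  gcongr
  calc ((2 : ENNReal) ^ (e * d))⁻¹ ≤ (2 ^ e)⁻¹ := by
        gcongr
        exacts [one_le_two, Nat.le_mul_of_pos_right e hd]
    _ ≤ ENNReal.ofReal ε := by simpa only [ENNReal.inv_pow] using he.le

lemma HasSparseSubcell.mono {μ : Measure (EuclideanSpace ℝ (Fin d))} {e e' : ℕ} (hle : e ≤ e')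
    {ε : ℝ} {n : ℕ} {j : Fin d → ℤ} (h : HasSparseSubcell μ e ε n j) :
    HasSparseSubcell μ e' ε n j := by
  obtain ⟨k, hk⟩ := h
  obtain ⟨s, rfl⟩ := Nat.exists_eq_add_of_le hle
  obtain ⟨k', hk'⟩ : ∃ k', dyadicSubIdx (e + s) j k' = dyadicSubIdx s (dyadicSubIdx e j k) 0 := by
    refine exists_dyadicSubIdx_eq_iff.2 fun i => ?_
    rw [pow_add, mul_comm, ← Int.ediv_ediv_of_nonneg (by positivity), dyadicSubIdx_ediv,
      dyadicSubIdx_ediv]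
  refine ⟨k', (measure_mono ?_).trans hk⟩
  rw [hk', ← add_assoc, dyadicCell_eq_iUnion (n + e) s]
  exact subset_iUnion_of_subset 0 subset_rfl

lemma hasSparseSubcell_of_por2_le (hd : 0 < d) {μ : Measure (EuclideanSpace ℝ (Fin d))} {ε : ℝ}
    (hε : 0 < ε) {x : EuclideanSpace ℝ (Fin d)} {n ℓ : ℕ} (h : por2 d μ x n ε ≤ ℓ) :
    HasSparseSubcell μ ℓ ε n (dyadicIdx d n x) := by
  rw [por2_eq_sInf_hasSparseSubcell] at h
  exact .mono h (Nat.sInf_mem (exists_hasSparseSubcell hd μ hε n (dyadicIdx d n x)))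

end SparseSubcells

section ScaleWeight

variable {d : ℕ} {μ : Measure (EuclideanSpace ℝ (Fin d))} {ℓ : ℕ} {ε : ℝ}

/-- The saving `2^{-ℓd}` in the exponent of the Cauchy–Schwarz factor `2^{ℓd/2}` that a cell earns
when it has a sparse subcell of relative level `ℓ`; other cells earn nothing. -/
noncomputable def sparsityGain (μ : Measure (EuclideanSpace ℝ (Fin d))) (ℓ : ℕ) (ε : ℝ) (n : ℕ)
    (j : Fin d → ℤ) : ℝ :=
  if HasSparseSubcell μ ℓ ε n j then (2 ^ (ℓ * d))⁻¹ else 0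

lemma sparsityGain_nonneg (n : ℕ) (j : Fin d → ℤ) : 0 ≤ sparsityGain μ ℓ ε n j := by
  rw [sparsityGain]
  positivity

lemma sum_measureReal_dyadicSubcell [IsLocallyFiniteMeasure μ] (n e : ℕ) (j : Fin d → ℤ) :
    ∑ k, μ.real (dyadicCell d (n + e) (dyadicSubIdx e j k)) = μ.real (dyadicCell d n j) := by
  rw [measureReal_def, ← sum_measure_dyadicSubcell μ n e j,
    ENNReal.toReal_sum fun _ _ => (isBounded_dyadicCell _ _).measure_lt_top.ne]
  rfl

lemma sum_sqrt_dyadicSubcell_le [IsLocallyFiniteMeasure μ]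
    (hε : IsSparsityThreshold (2 ^ (ℓ * d)) ε) (n : ℕ) (j : Fin d → ℤ) :
    ∑ k, √(μ.real (dyadicCell d (n + ℓ) (dyadicSubIdx ℓ j k))) ≤
      √(2 ^ (ℓ * d - sparsityGain μ ℓ ε n j)) * √(μ.real (dyadicCell d n j)) := by
  have hcard : ((Finset.univ : Finset (Fin d → Fin (2 ^ ℓ))).card : ℝ) = 2 ^ (ℓ * d) := by
    rw [Finset.card_univ, card_dyadicSubIdx, Nat.cast_pow, Nat.cast_ofNat]
  have hsum := sum_measureReal_dyadicSubcell (μ := μ) n ℓ j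
  have hpow : (2 : ℝ) ^ (ℓ * d : ℝ) = 2 ^ (ℓ * d) := by
    rw [← Nat.cast_mul, Real.rpow_natCast]
  rw [sparsityGain]
  split_ifs with hsparse
  · obtain ⟨k, hk⟩ := hsparse
    have hk_real : μ.real (dyadicCell d (n + ℓ) (dyadicSubIdx ℓ j k)) ≤
        ε * μ.real (dyadicCell d n j) := by
      have := ENNReal.toReal_mono
        (ENNReal.mul_ne_top ENNReal.ofReal_ne_top (isBounded_dyadicCell n j).measure_lt_top.ne) hk
      rwa [ENNReal.toReal_mul, ENNReal.toReal_ofReal hε.1.le] at this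
    refine (sum_sqrt_le_of_exists_le_mul (fun _ => measureReal_nonneg) hε.1.le hsum
      ⟨k, Finset.mem_univ k, hk_real⟩).trans ?_
    rw [hcard, sub_eq_add_neg (ℓ * d : ℝ), Real.rpow_add two_pos, hpow]
    gcongr
    exact hε.2
  · have hcs := sum_sqrt_le_sqrt_card_mul_sqrt_sum Finset.univ fun k =>
      measureReal_nonneg (μ := μ) (s := dyadicCell d (n + ℓ) (dyadicSubIdx ℓ j k))
    rwa [hsum, hcard, ← hpow, ← sub_zero (ℓ * d : ℝ)] at hcs

/-- The supermartingale of the argument, started at level `n` and sampled every `ℓ` levels: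
`μ(Q_{n+ℓm}(x))^{-1/2}` divided by the Cauchy–Schwarz factors of the `m` cells passed. -/
noncomputable def scaleWeight (μ : Measure (EuclideanSpace ℝ (Fin d))) (ℓ : ℕ) (ε : ℝ) (m n : ℕ)
    (x : EuclideanSpace ℝ (Fin d)) : ℝ :=
  √(2 ^ (∑ i ∈ Finset.range m,
      (sparsityGain μ ℓ ε (n + ℓ * i) (dyadicIdx d (n + ℓ * i) x) - ℓ * d)) /
    μ.real (Qcube d (n + ℓ * m) x))

lemma scaleWeight_succ (m n : ℕ) (x : EuclideanSpace ℝ (Fin d)) :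
    scaleWeight μ ℓ ε (m + 1) n x =
      (√(2 ^ (ℓ * d - sparsityGain μ ℓ ε n (dyadicIdx d n x))))⁻¹ *
        scaleWeight μ ℓ ε m (n + ℓ) x := by
  have hlevel (i : ℕ) : n + ℓ * (i + 1) = n + ℓ + ℓ * i := by ring
  rw [scaleWeight, scaleWeight, Finset.sum_range_succ', Real.rpow_add two_pos, mul_comm,
    mul_div_assoc, Real.sqrt_mul (by positivity), ← Real.sqrt_inv, ← Real.rpow_neg zero_le_two]
  simp only [hlevel, mul_zero, add_zero, neg_sub]

lemma measurable_scaleWeight (m n : ℕ) : Measurable (scaleWeight μ ℓ ε m n) := by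
  have hgain (i : ℕ) : Measurable fun x => sparsityGain μ ℓ ε i (dyadicIdx d i x) :=
    (Measurable.of_discrete (f := sparsityGain μ ℓ ε i)).comp (measurable_dyadicIdx i)
  have hmass (i : ℕ) : Measurable fun x => μ.real (Qcube d i x) :=
    (Measurable.of_discrete (f := fun j => μ.real (dyadicCell d i j))).comp
      (measurable_dyadicIdx i)
  unfold scaleWeight
  fun_prop

lemma setLIntegral_scaleWeight_zero [IsLocallyFiniteMeasure μ] (n : ℕ) (j : Fin d → ℤ) :
    ∫⁻ x in dyadicCell d n j, ENNReal.ofReal (scaleWeight μ ℓ ε 0 n x) ∂μ =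
      ENNReal.ofReal √(μ.real (dyadicCell d n j)) := by
  have hconst : EqOn (fun x => ENNReal.ofReal (scaleWeight μ ℓ ε 0 n x))
      (fun _ => ENNReal.ofReal (√(μ.real (dyadicCell d n j)))⁻¹) (dyadicCell d n j) := by
    intro x hx
    simp [scaleWeight, Qcube, mem_dyadicCell_iff.1 hx]
  rw [setLIntegral_congr_fun (measurableSet_dyadicCell n j) hconst, setLIntegral_const,
    ← ofReal_measureReal (isBounded_dyadicCell n j).measure_lt_top.ne,
    ← ENNReal.ofReal_mul (by positivity), inv_mul_eq_div, Real.div_sqrt]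

lemma setLIntegral_scaleWeight_le [IsLocallyFiniteMeasure μ]
    (hε : IsSparsityThreshold (2 ^ (ℓ * d)) ε) (m n : ℕ) (j : Fin d → ℤ) :
    ∫⁻ x in dyadicCell d n j, ENNReal.ofReal (scaleWeight μ ℓ ε m n x) ∂μ ≤
      ENNReal.ofReal √(μ.real (dyadicCell d n j)) := by
  induction m generalizing n j with
  | zero => exact (setLIntegral_scaleWeight_zero n j).le
  | succ m ih =>
    set c := √(2 ^ (ℓ * d - sparsityGain μ ℓ ε n j)) with hc
    have hcpos : 0 < c := by positivity
    have hfactor : EqOn (fun x => ENNReal.ofReal (scaleWeight μ ℓ ε (m + 1) n x))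
        (fun x => ENNReal.ofReal c⁻¹ * ENNReal.ofReal (scaleWeight μ ℓ ε m (n + ℓ) x))
        (dyadicCell d n j) := by
      intro x hx
      simp only [scaleWeight_succ, mem_dyadicCell_iff.1 hx, ← hc]
      exact ENNReal.ofReal_mul (by positivity)
    rw [setLIntegral_congr_fun (measurableSet_dyadicCell n j) hfactor,
      lintegral_const_mul' _ _ ENNReal.ofReal_ne_top]
    calc ENNReal.ofReal c⁻¹ *
          ∫⁻ x in dyadicCell d n j, ENNReal.ofReal (scaleWeight μ ℓ ε m (n + ℓ) x) ∂μ
        ≤ ENNReal.ofReal c⁻¹ *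
          ∑ k, ENNReal.ofReal √(μ.real (dyadicCell d (n + ℓ) (dyadicSubIdx ℓ j k))) := by
          gcongr
          rw [dyadicCell_eq_iUnion n ℓ j]
          refine (lintegral_iUnion_le _ _).trans ?_
          rw [tsum_fintype]
          exact Finset.sum_le_sum fun k _ => ih _ _
      _ = ENNReal.ofReal
          (c⁻¹ * ∑ k, √(μ.real (dyadicCell d (n + ℓ) (dyadicSubIdx ℓ j k)))) := by
          rw [ENNReal.ofReal_mul (by positivity),
            ENNReal.ofReal_sum_of_nonneg fun _ _ => Real.sqrt_nonneg _]
      _ ≤ ENNReal.ofReal √(μ.real (dyadicCell d n j)) :=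
          ENNReal.ofReal_le_ofReal <|
            (inv_mul_le_iff₀ hcpos).2 (sum_sqrt_dyadicSubcell_le hε n j)

lemma ae_eventually_scaleWeight_lt [IsLocallyFiniteMeasure μ]
    (hε : IsSparsityThreshold (2 ^ (ℓ * d)) ε) (n : ℕ) :
    ∀ᵐ x ∂μ, ∀ᶠ m : ℕ in atTop, scaleWeight μ ℓ ε m n x < ((m : ℝ) + 1) ^ 2 := by
  have hcell (j : Fin d → ℤ) : ∀ᵐ x ∂μ, x ∈ dyadicCell d n j → ∀ᶠ m : ℕ in atTop,
      ENNReal.ofReal (scaleWeight μ ℓ ε m n x) < ENNReal.ofReal (((m : ℝ) + 1) ^ 2) := by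
    rw [← ae_restrict_iff' (measurableSet_dyadicCell n j)]
    exact ae_eventually_lt_sq_of_lintegral_le
      (fun m => (measurable_scaleWeight m n).ennreal_ofReal.aemeasurable) ENNReal.ofReal_ne_top
      fun m => setLIntegral_scaleWeight_le hε m n j
  filter_upwards [ae_all_iff.2 hcell] with x hx
  filter_upwards [hx _ (mem_Qcube_self n x)] with m hm
  exact (ENNReal.ofReal_lt_ofReal_iff (by positivity)).1 hm

end ScaleWeight

section MassDecay

variable {d : ℕ} {μ : Measure (EuclideanSpace ℝ (Fin d))} {ℓ : ℕ} {ε : ℝ}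
  {x : EuclideanSpace ℝ (Fin d)}

lemma neg_logb_measureReal_Qcube_lt (hx : ∀ n, 0 < μ.real (Qcube d n x)) {m n : ℕ}
    (h : scaleWeight μ ℓ ε m n x < ((m : ℝ) + 1) ^ 2) :
    -Real.logb 2 (μ.real (Qcube d (n + ℓ * m) x)) <
      4 * Real.logb 2 (m + 1) + m * (ℓ * d) -
        ∑ i ∈ Finset.range m, sparsityGain μ ℓ ε (n + ℓ * i) (dyadicIdx d (n + ℓ * i) x) := by
  rw [scaleWeight, Real.sqrt_lt' (by positivity), div_lt_iff₀ (hx _), ← pow_mul,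
    ← Real.lt_logb_iff_rpow_lt one_lt_two (mul_pos (by positivity) (hx _)),
    Real.logb_mul (by positivity) (hx _).ne', Real.logb_pow, Finset.sum_sub_distrib,
    Finset.sum_const, Finset.card_range, nsmul_eq_mul] at h
  push_cast at h
  linarith

lemma inv_mul_card_por2_le_sum_sparsityGain (hd : 0 < d) (hε : 0 < ε) (n : ℕ) :
    (2 ^ (ℓ * d))⁻¹ * (((Finset.range n).filter fun i => por2 d μ x i ε ≤ ℓ).card : ℝ) ≤
      ∑ t ∈ Finset.range n, sparsityGain μ ℓ ε t (dyadicIdx d t x) := by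
  rw [Finset.card_filter, Nat.cast_sum, Finset.mul_sum]
  refine Finset.sum_le_sum fun t _ => ?_
  by_cases h : por2 d μ x t ε ≤ ℓ
  · simp [h, sparsityGain, hasSparseSubcell_of_por2_le hd hε h]
  · simp [h, sparsityGain_nonneg]

variable [IsLocallyFiniteMeasure μ]

lemma ae_forall_measureReal_Qcube_pos : ∀ᵐ x ∂μ, ∀ n, 0 < μ.real (Qcube d n x) := by
  refine ae_all_iff.2 fun n => ?_
  filter_upwards [ae_measure_preimage_singleton_ne_zero (measurable_dyadicIdx n) μ] with x hx
  rw [← dyadicCell_eq_preimage] at hx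
  exact ENNReal.toReal_pos hx (isBounded_dyadicCell _ _).measure_lt_top.ne

lemma mul_neg_logb_measureReal_Qcube_le (hx : ∀ n, 0 < μ.real (Qcube d n x)) {m n : ℕ}
    (hn : n ≤ ℓ * m) (h : ∀ a ∈ Finset.range ℓ, scaleWeight μ ℓ ε m a x < ((m : ℝ) + 1) ^ 2) :
    ℓ * -Real.logb 2 (μ.real (Qcube d n x)) ≤
      ℓ * (4 * Real.logb 2 (m + 1) + m * (ℓ * d)) -
        ∑ t ∈ Finset.range (ℓ * m), sparsityGain μ ℓ ε t (dyadicIdx d t x) := by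
  have hstart : ∀ a ∈ Finset.range ℓ, -Real.logb 2 (μ.real (Qcube d n x)) ≤
      4 * Real.logb 2 (m + 1) + m * (ℓ * d) -
        ∑ i ∈ Finset.range m, sparsityGain μ ℓ ε (a + ℓ * i) (dyadicIdx d (a + ℓ * i) x) := by
    intro a ha
    refine (neg_le_neg ?_).trans (neg_logb_measureReal_Qcube_lt hx (h a ha)).le
    exact Real.logb_le_logb_of_le one_lt_two (hx _) <|
      measureReal_mono (Qcube_anti x (by lia)) (isBounded_dyadicCell _ _).measure_lt_top.ne
  have hsum := Finset.sum_le_sum hstart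
  rwa [Finset.sum_sub_distrib, Finset.sum_const, Finset.sum_const, Finset.card_range,
    nsmul_eq_mul, nsmul_eq_mul,
    sum_range_sum_range_add_mul ℓ m fun t => sparsityGain μ ℓ ε t (dyadicIdx d t x)] at hsum

lemma eventually_neg_logb_measureReal_Qcube_le (hd : 0 < d) (hℓ : 0 < ℓ) (hε : 0 < ε)
    (hx : ∀ n, 0 < μ.real (Qcube d n x))
    (h : ∀ a, ∀ᶠ m : ℕ in atTop, scaleWeight μ ℓ ε m a x < ((m : ℝ) + 1) ^ 2) :
    ∀ᶠ n : ℕ in atTop, -Real.logb 2 (μ.real (Qcube d n x)) ≤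
      4 * Real.logb 2 (n + 2) + (n + ℓ) * d -
        (2 ^ (ℓ * d))⁻¹ / ℓ * ((Finset.range n).filter fun i => por2 d μ x i ε ≤ ℓ).card := by
  have hall : ∀ᶠ m : ℕ in atTop, ∀ a ∈ Finset.range ℓ,
      scaleWeight μ ℓ ε m a x < ((m : ℝ) + 1) ^ 2 :=
    (eventually_all_finset _).2 fun a _ => h a
  have hblocks : Tendsto (fun n => n / ℓ + 1) atTop atTop :=
    (tendsto_add_atTop_nat 1).comp (Nat.tendsto_div_const_atTop hℓ.ne')
  filter_upwards [hblocks.eventually hall] with n hn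
  set m := n / ℓ + 1
  have hle_blocks : n ≤ ℓ * m := (Nat.lt_mul_div_succ n hℓ).le
  have hblocks_le : (m * ℓ : ℝ) ≤ n + ℓ := by
    exact_mod_cast (by linarith [Nat.div_mul_le_self n ℓ] : (n / ℓ + 1) * ℓ ≤ n + ℓ)
  have hm_le : (m + 1 : ℝ) ≤ n + 2 := by
    exact_mod_cast (by linarith [Nat.div_le_self n ℓ] : n / ℓ + 1 + 1 ≤ n + 2)
  have hcount := (inv_mul_card_por2_le_sum_sparsityGain (μ := μ) (x := x) (ℓ := ℓ) hd hε n).trans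
    (Finset.sum_le_sum_of_subset_of_nonneg (Finset.range_mono hle_blocks)
      fun _ _ _ => sparsityGain_nonneg _ _)
  have hℓpos : (0 : ℝ) < ℓ := mod_cast hℓ
  refine le_of_mul_le_mul_left ?_ hℓpos
  calc ℓ * -Real.logb 2 (μ.real (Qcube d n x))
      ≤ ℓ * (4 * Real.logb 2 (m + 1) + m * (ℓ * d)) -
        ∑ t ∈ Finset.range (ℓ * m), sparsityGain μ ℓ ε t (dyadicIdx d t x) :=
        mul_neg_logb_measureReal_Qcube_le hx hle_blocks hn
    _ ≤ ℓ * (4 * Real.logb 2 (n + 2) + (n + ℓ) * d) - (2 ^ (ℓ * d))⁻¹ *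
        ((Finset.range n).filter fun i => por2 d μ x i ε ≤ ℓ).card := by
        rw [← mul_assoc (m : ℝ)]
        gcongr
        exact one_lt_two
    _ = _ := by field_simp

lemma upperLocalDim_le_of_scaleWeight_lt (hd : 0 < d) (hℓ : 0 < ℓ) (hε : 0 < ε) {ρ : ℝ}
    (hx : ∀ n, 0 < μ.real (Qcube d n x))
    (hweight : ∀ a, ∀ᶠ m : ℕ in atTop, scaleWeight μ ℓ ε m a x < ((m : ℝ) + 1) ^ 2)
    (hpor : ρ ≤ liminf (fun n : ℕ =>
      (((Finset.range n).filter fun i => por2 d μ x i ε ≤ ℓ).card : ℝ) / n) atTop) :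
    upperLocalDim μ x ≤ ((d - (2 ^ (ℓ * d))⁻¹ / ℓ * ρ : ℝ) : EReal) := by
  refine EReal.le_of_forall_lt_iff_le.1 fun B hB => ?_
  have hrate := eventually_sub_mul_lt_of_le_liminf (tendsto_logb_add_linear_div 4 d ℓ)
    (isBoundedUnder_of ⟨0, fun n => by positivity⟩) (by positivity) hpor (EReal.coe_lt_coe_iff.1 hB)
  refine upperLocalDim_le_of_eventually_two_rpow_le (C := √d + 1) (by positivity) ?_
  filter_upwards [hrate, eventually_neg_logb_measureReal_Qcube_le hd hℓ hε hx hweight,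
    eventually_gt_atTop 0] with n hn hdecay hnpos
  have hnpos : (0 : ℝ) < n := mod_cast hnpos
  rw [← mul_div_assoc, ← sub_div, div_lt_iff₀ hnpos] at hn
  calc (2 : ℝ) ^ (-(B * n)) ≤ μ.real (Qcube d n x) :=
        (Real.le_logb_iff_rpow_le one_lt_two (hx n)).1 (by linarith)
    _ ≤ μ.real (ball x ((√d + 1) / 2 ^ n)) :=
        measureReal_mono (Qcube_subset_ball n x) measure_ball_lt_top.ne

end MassDecay

theorem stmt10_general {d ℓ : ℕ} (hd : 0 < d) (hℓ : 0 < ℓ) :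
    ∃ ε : ℝ, 0 < ε ∧ ∀ (ρ : ℝ) (μ : Measure (EuclideanSpace ℝ (Fin d)))
      [IsLocallyFiniteMeasure μ],
      (∀ᵐ x ∂μ, ρ ≤ liminf (fun n : ℕ =>
        (((Finset.range n).filter fun i => por2 d μ x i ε ≤ ℓ).card : ℝ) / n) atTop) →
      upperPackingDim μ ≤
        (((d : ℝ) - (2 : ℝ) ^ (-((ℓ * d : ℕ) : ℤ)) * ρ / ℓ : ℝ) : EReal) := by
  obtain ⟨ε, hε⟩ := exists_isSparsityThreshold (one_le_pow₀ (n := ℓ * d) (one_le_two (α := ℝ)))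
  refine ⟨ε, hε.1, fun ρ μ _ hpor => essSup_le_of_ae_le _ ?_⟩
  filter_upwards [ae_all_iff.2 (ae_eventually_scaleWeight_lt hε),
    ae_forall_measureReal_Qcube_pos, hpor] with x hweight hpos hx
  rw [zpow_neg, zpow_natCast, mul_div_right_comm]
  exact upperLocalDim_le_of_scaleWeight_lt hd hℓ hε.1 hpos hweight hx

/-- A dyadic mean `(ℓ,ρ)`-porous Borel probability measure on `[0,1)^d`
(assigning zero mass to boundaries of dyadic cubes) has upper packing dimension at most
`d − 2^{−ℓd}·ρ/ℓ`. -/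
theorem stmt10 (d ℓ : ℕ) (hd : 0 < d) (hℓ : 0 < ℓ) (ρ : ℝ) (hρ : ρ ∈ Set.Ioc (0 : ℝ) 1)
    (μ : Measure (EuclideanSpace ℝ (Fin d))) [IsProbabilityMeasure μ]
    (hsupp : μ (unitCube d) = 1)
    (hbd : ∀ Q, IsDyadicCube d Q → μ (frontier Q) = 0)
    (hpor : IsDyadicMeanPorous d μ ℓ ρ) :
    upperPackingDim μ ≤
      (((d : ℝ) - (2 : ℝ) ^ (-((ℓ * d : ℕ) : ℤ)) * ρ / ℓ : ℝ) : EReal) := by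
  obtain ⟨ε, hε, hdim⟩ := stmt10_general hd hℓ
  exact hdim ρ μ (hpor ε hε)
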